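/- For n ≥ 1, the number of classes of objects of the category of contravariant representations of {1,…,n} over F₂ with finite-dimensional values that are closed under isomorphism, contain the zero object, and are closed under finite direct sums and direct summands equals 2^{n(n+1)/2}. Equivalently, the number of isomorphism classes of indecomposable objects of this category is n(n+1)/2. -/

import Mathlib

/-!
Over the linear order `1 < ⋯ < n`, each pair `a ≤ b` gives an interval module, equal to `F₂` on
`[a, b]` and zero elsewhere. Three facts about these carry the result.

* `exists_retract`: every nonzero representation `X` has an interval module as a retract. If `a` is
  the smallest vertex with `X a ≠ 0` and `b` the largest with `X b → X a` nonzero, then an element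
  of `X b` with nonzero image in `X a`, together with a functional on `X a` detecting that image,
  gives maps from and to the interval module on `[a, b]`.
* `end_intervalRep`: an interval module has no endomorphisms besides `0` and the identity. Hence it
  is indecomposable, distinct intervals are not retracts of one another, and
  (`retract_biprod`) an interval module that is a retract of `X ⊞ Y` is a retract of `X` or of `Y`.
* `exists_complement`: retracts are direct summands.

So the indecomposables are exactly the interval modules, counted by pairs `a ≤ b`. By induction on
the total dimension, an additive class contains `X` if and only if it contains all interval retracts
of `X` (`mem_iff_forall_retract`); conversely `retract_biprod` shows that any set of intervals arises
from an additive class, so additive classes correspond to sets of pairs `a ≤ b`.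
-/

open CategoryTheory CategoryTheory.Limits

noncomputable section

abbrev F2 : Type := ZMod 2

/-- The abelian category of contravariant representations of `{1,…,n}` over `F₂`. -/
abbrev RepCat (n : ℕ) := (Fin n)ᵒᵖ ⥤ ModuleCat.{0} F2

/-- Representations all of whose values are finite dimensional. -/
def FinDimRep (n : ℕ) := {X : RepCat n // ∀ i : (Fin n)ᵒᵖ, FiniteDimensional F2 (X.obj i)}

variable {n : ℕ}

/-- The class `S` is closed under isomorphism. -/
def IsoClosed (S : Set (FinDimRep n)) : Prop :=
  ∀ X Y : FinDimRep n, Nonempty (X.1 ≅ Y.1) → X ∈ S → Y ∈ S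

/-- The class `S` contains the zero object. -/
def ContainsZero (S : Set (FinDimRep n)) : Prop :=
  ∀ X : FinDimRep n, IsZero X.1 → X ∈ S

/-- The class `S` is closed under finite direct sums. -/
def SumClosed (S : Set (FinDimRep n)) : Prop :=
  ∀ X Y Z : FinDimRep n, X ∈ S → Y ∈ S → Nonempty (Z.1 ≅ X.1 ⊞ Y.1) → Z ∈ S

/-- The class `S` is closed under direct summands. -/
def SummandClosed (S : Set (FinDimRep n)) : Prop :=
  ∀ X Y Z : FinDimRep n, Z ∈ S → Nonempty (Z.1 ≅ X.1 ⊞ Y.1) → X ∈ S ∧ Y ∈ S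

/-- The class `S` is closed under subobjects. -/
def SubClosed (S : Set (FinDimRep n)) : Prop :=
  ∀ X Y : FinDimRep n, Y ∈ S → (∃ f : X.1 ⟶ Y.1, Mono f) → X ∈ S

/-- The class `S` is closed under quotient objects. -/
def QuotClosed (S : Set (FinDimRep n)) : Prop :=
  ∀ X Y : FinDimRep n, X ∈ S → (∃ f : X.1 ⟶ Y.1, Epi f) → Y ∈ S

/-- The class `S` is closed under extensions: the middle term of a short exact
sequence whose outer terms lie in `S` again lies in `S`. -/
def ExtClosed (S : Set (FinDimRep n)) : Prop :=
  ∀ X Y Z : FinDimRep n, X ∈ S → Z ∈ S →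
    (∃ (f : X.1 ⟶ Y.1) (g : Y.1 ⟶ Z.1) (w : f ≫ g = 0),
      (ShortComplex.mk f g w).ShortExact) → Y ∈ S

/-- The class `S` is closed under kernels of morphisms between its objects. -/
def KerClosed (S : Set (FinDimRep n)) : Prop :=
  ∀ X Y K : FinDimRep n, X ∈ S → Y ∈ S →
    (∃ f : X.1 ⟶ Y.1, Nonempty (K.1 ≅ kernel f)) → K ∈ S

/-- The class `S` is closed under cokernels of morphisms between its objects. -/
def CokerClosed (S : Set (FinDimRep n)) : Prop :=
  ∀ X Y C : FinDimRep n, X ∈ S → Y ∈ S →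
    (∃ f : X.1 ⟶ Y.1, Nonempty (C.1 ≅ cokernel f)) → C ∈ S

/-- An object of the category of representations with finite dimensional values is
indecomposable if it is non-zero and in any direct sum decomposition one summand is zero. -/
def IndecomposableRep {n : ℕ} (X : FinDimRep n) : Prop :=
  ¬IsZero X.1 ∧ ∀ Y Z : FinDimRep n, Nonempty (X.1 ≅ Y.1 ⊞ Z.1) → IsZero Y.1 ∨ IsZero Z.1

/-- Isomorphism as an equivalence relation on the indecomposable objects. -/
def isoSetoid (n : ℕ) : Setoid {X : FinDimRep n // IndecomposableRep X} where
  r A B := Nonempty (A.1.1 ≅ B.1.1)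
  iseqv := ⟨fun _ => ⟨Iso.refl _⟩, fun ⟨e⟩ => ⟨e.symm⟩, fun ⟨e⟩ ⟨e'⟩ => ⟨e.trans e'⟩⟩

open Opposite

/-! ### Interval modules and their endomorphisms -/

/-- The fibre at `i` of the interval module on `[a, b]`: all of `F₂` if `i ∈ [a, b]`,
and zero otherwise. Realised as a submodule of `F₂` so that elements at different vertices are
comparable. -/
def intervalFibre (a b i : Fin n) : Submodule F2 F2 where
  carrier := {c | c ≠ 0 → a ≤ i ∧ i ≤ b}
  zero_mem' := fun h => absurd rfl h
  add_mem' := by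
    intro x y hx hy hxy
    by_cases h : x = 0
    · subst h; exact hy (by simpa using hxy)
    · exact hx h
  smul_mem' := by
    intro c x hx hcx
    exact hx (right_ne_zero_of_mul hcx)

lemma mem_intervalFibre_of_mem {a b i : Fin n} (h : a ≤ i ∧ i ≤ b) (c : F2) :
    c ∈ intervalFibre a b i := fun _ => h

lemma intervalFibre_eq_zero {a b i : Fin n} (h : ¬ (a ≤ i ∧ i ≤ b)) (x : intervalFibre a b i) :
    x = 0 := by
  by_contra hx
  exact h (x.2 (fun h0 => hx (Subtype.ext h0)))

/-- The `F₂`-linear map between fibres that sends `c` to itself when the target vertex lies in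
`[a, b]`, and to zero otherwise. -/
def intervalMap (a b i j : Fin n) : intervalFibre a b i →ₗ[F2] intervalFibre a b j where
  toFun x := if h : a ≤ j ∧ j ≤ b then ⟨x.1, mem_intervalFibre_of_mem h _⟩ else 0
  map_add' x y := by split_ifs <;> simp
  map_smul' c x := by split_ifs <;> simp

lemma intervalMap_of_mem {a b i j : Fin n} (h : a ≤ j ∧ j ≤ b) (x : intervalFibre a b i) :
    (intervalMap a b i j x).1 = x.1 := by
  simp [intervalMap, h]

/-- The interval module on `[a, b]`, generated at the vertex `b` and killed below `a`. -/
def intervalRep (a b : Fin n) : RepCat n where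
  obj i := ModuleCat.of F2 (intervalFibre a b i.unop)
  map {i j} _ := ModuleCat.ofHom (intervalMap a b i.unop j.unop)
  map_id i := by
    refine ModuleCat.hom_ext (LinearMap.ext fun (x : intervalFibre a b i.unop) => ?_)
    by_cases h : a ≤ i.unop ∧ i.unop ≤ b
    · exact Subtype.ext (intervalMap_of_mem h x)
    · exact (intervalFibre_eq_zero h _).trans (intervalFibre_eq_zero h _).symm
  map_comp {i j k} f g := by
    refine ModuleCat.hom_ext (LinearMap.ext fun (x : intervalFibre a b i.unop) => ?_)
    by_cases hk : a ≤ k.unop ∧ k.unop ≤ b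
    · by_cases hi : a ≤ i.unop ∧ i.unop ≤ b
      · have hj : a ≤ j.unop ∧ j.unop ≤ b :=
          ⟨hk.1.trans (leOfHom g.unop), (leOfHom f.unop).trans hi.2⟩
        refine Subtype.ext ?_
        change (intervalMap a b i.unop k.unop x).1 =
          (intervalMap a b j.unop k.unop (intervalMap a b i.unop j.unop x)).1
        rw [intervalMap_of_mem hk, intervalMap_of_mem hk, intervalMap_of_mem hj]
      · have : x = 0 := intervalFibre_eq_zero hi x
        subst this
        simp only [map_zero]
    · exact (intervalFibre_eq_zero hk _).trans (intervalFibre_eq_zero hk _).symm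

/-- The interval module as an object of `FinDimRep n`. -/
def intervalFD (a b : Fin n) : FinDimRep n :=
  ⟨intervalRep a b, fun i => inferInstanceAs (FiniteDimensional F2 (intervalFibre a b i.unop))⟩

lemma nontrivial_intervalRep {a b i : Fin n} (h : a ≤ i ∧ i ≤ b) :
    Nontrivial ((intervalRep a b).obj (op i)) :=
  ⟨⟨⟨1, mem_intervalFibre_of_mem h 1⟩, 0, fun h => one_ne_zero (congrArg Subtype.val h)⟩⟩

lemma subsingleton_intervalRep {a b i : Fin n} (h : ¬ (a ≤ i ∧ i ≤ b)) :
    Subsingleton ((intervalRep a b).obj (op i)) :=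
  ⟨fun x y => (intervalFibre_eq_zero h x).trans (intervalFibre_eq_zero h y).symm⟩

/-- An endomorphism of an interval module is determined by its value on the generator at `b`,
and over `F₂` there are only two possible values. -/
lemma end_intervalRep {a b : Fin n} (hab : a ≤ b) (e : intervalRep a b ⟶ intervalRep a b) :
    e = 0 ∨ e = 𝟙 _ := by
  let u : intervalFibre a b b := ⟨1, mem_intervalFibre_of_mem ⟨hab, le_rfl⟩ 1⟩
  obtain ⟨c, hc⟩ : ∃ c : intervalFibre a b b, (e.app (op b)).hom u = c := ⟨_, rfl⟩
  have key : ∀ (i : Fin n) (x : intervalFibre a b i),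
      ((show intervalFibre a b i from (e.app (op i)).hom x)).1 = x.1 * c.1 := by
    intro i x
    by_cases hi : a ≤ i ∧ i ≤ b
    · have hx : x = x.1 • intervalMap a b b i u := by
        refine Subtype.ext ?_
        rw [Submodule.coe_smul, intervalMap_of_mem hi]
        simp [u]
      have hnat := congrArg (fun f => f.hom u) (e.naturality (homOfLE hi.2).op)
      change (e.app (op i)).hom (intervalMap a b b i u) =
        intervalMap a b b i ((e.app (op b)).hom u) at hnat
      rw [hc] at hnat
      have h2 : (e.app (op i)).hom x = x.1 • intervalMap a b b i c := by
        conv_lhs => rw [hx]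
        rw [← hnat]
        exact map_smul (e.app (op i)).hom x.1 _
      rw [h2]
      change (x.1 • intervalMap a b b i c).1 = _
      rw [Submodule.coe_smul, intervalMap_of_mem hi, smul_eq_mul]
    · rw [intervalFibre_eq_zero hi x]
      have : (e.app (op i)).hom (0 : intervalFibre a b i) = 0 := map_zero (e.app (op i)).hom
      rw [this]
      exact (zero_mul c.1).symm
  have hc01 : ∀ z : F2, z = 0 ∨ z = 1 := by decide
  rcases hc01 c.1 with h | h
  · left
    ext i x
    refine Subtype.ext ((key i.unop x).trans ?_)
    rw [h, mul_zero]; rfl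
  · right
    ext i x
    refine Subtype.ext ((key i.unop x).trans ?_)
    rw [h, mul_one]; rfl

lemma not_isZero_intervalRep {a b : Fin n} (hab : a ≤ b) : ¬ IsZero (intervalRep a b) := by
  intro h
  have h1 := (Functor.isZero_iff _).1 h (op b)
  have := ModuleCat.subsingleton_of_isZero h1
  have := nontrivial_intervalRep (n := n) (a := a) (b := b) (i := b) ⟨hab, le_rfl⟩
  exact not_subsingleton _ ‹Subsingleton ((intervalRep a b).obj (op b))›

lemma id_ne_zero_intervalRep {a b : Fin n} (hab : a ≤ b) : 𝟙 (intervalRep a b) ≠ 0 :=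
  fun h => not_isZero_intervalRep hab ((IsZero.iff_id_eq_zero _).2 h)

lemma interval_eq_of_iso {a b c d : Fin n} (hab : a ≤ b) (hcd : c ≤ d)
    (e : intervalRep a b ≅ intervalRep c d) : a = c ∧ b = d := by
  have sub : ∀ {a b c d : Fin n}, (intervalRep a b ≅ intervalRep c d) → ∀ i, a ≤ i ∧ i ≤ b →
      c ≤ i ∧ i ≤ d := by
    intro a b c d e i hi
    by_contra h
    have := subsingleton_intervalRep h
    have := nontrivial_intervalRep hi
    have := ((e.app (op i)).toLinearEquiv.toEquiv).subsingleton
    exact not_subsingleton ((intervalRep a b).obj (op i)) this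
  have h1 := sub e a ⟨le_rfl, hab⟩
  have h2 := sub e b ⟨hab, le_rfl⟩
  have h3 := sub e.symm c ⟨le_rfl, hcd⟩
  have h4 := sub e.symm d ⟨hcd, le_rfl⟩
  exact ⟨le_antisymm h3.1 h1.1, le_antisymm h2.2 h4.2⟩

lemma interval_eq_of_retract {a b c d : Fin n} (hab : a ≤ b) (hcd : c ≤ d)
    (h : Retract (intervalRep a b) (intervalRep c d)) : a = c ∧ b = d := by
  -- `h.r ≫ h.i` is an idempotent of the larger module, hence zero or the identity.
  rcases end_intervalRep hcd (h.r ≫ h.i) with h0 | h1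
  · refine absurd ?_ (id_ne_zero_intervalRep hab)
    calc 𝟙 (intervalRep a b) = h.i ≫ (h.r ≫ h.i) ≫ h.r := by simp
      _ = 0 := by rw [h0]; simp
  · exact interval_eq_of_iso hab hcd ⟨h.i, h.r, h.retract, h1⟩

/-! ### Direct sums, retracts and complements -/

/-- An object whose only endomorphisms are `0` and the identity behaves like a prime element: if
it is a retract of a direct sum, it is a retract of one of the summands. -/
lemma retract_or_retract_of_end {C : Type*} [Category* C] [Preadditive C]
    [HasBinaryBiproducts C] {I X Y : C} (hI : ∀ e : I ⟶ I, e = 0 ∨ e = 𝟙 I)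
    (h : Retract I (X ⊞ Y)) : Nonempty (Retract I X) ∨ Nonempty (Retract I Y) := by
  have hsum : (h.i ≫ biprod.fst) ≫ (biprod.inl ≫ h.r) +
      (h.i ≫ biprod.snd) ≫ (biprod.inr ≫ h.r) = 𝟙 I := by
    calc _ = h.i ≫ (biprod.fst ≫ biprod.inl + biprod.snd ≫ biprod.inr) ≫ h.r := by
          simp only [Preadditive.add_comp, Preadditive.comp_add, Category.assoc]
      _ = 𝟙 I := by rw [biprod.total, Category.id_comp, h.retract]
  rcases hI ((h.i ≫ biprod.fst) ≫ (biprod.inl ≫ h.r)) with h0 | h1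
  · right
    rw [h0, zero_add] at hsum
    exact ⟨⟨_, _, hsum⟩⟩
  · exact Or.inl ⟨⟨_, _, h1⟩⟩

/-- An object whose only endomorphisms are `0` and the identity has no nontrivial direct sum
decomposition. -/
lemma isZero_or_isZero_of_end {C : Type*} [Category* C] [Preadditive C]
    [HasBinaryBiproducts C] {I Y Z : C} (hI : ∀ e : I ⟶ I, e = 0 ∨ e = 𝟙 I)
    (e : I ≅ Y ⊞ Z) : IsZero Y ∨ IsZero Z := by
  rcases hI (e.hom ≫ biprod.fst ≫ biprod.inl ≫ e.inv) with h | h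
  · left
    refine (IsZero.iff_id_eq_zero _).2 ?_
    calc 𝟙 Y = (biprod.inl ≫ e.inv) ≫ (e.hom ≫ biprod.fst ≫ biprod.inl ≫ e.inv) ≫
          e.hom ≫ biprod.fst := by simp
      _ = 0 := by rw [h]; simp
  · right
    refine (IsZero.iff_id_eq_zero _).2 ?_
    calc 𝟙 Z = (biprod.inr ≫ e.inv) ≫ 𝟙 I ≫ e.hom ≫ biprod.snd := by simp
      _ = (biprod.inr ≫ e.inv) ≫ (e.hom ≫ biprod.fst ≫ biprod.inl ≫ e.inv) ≫
          e.hom ≫ biprod.snd := by rw [h]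
      _ = 0 := by simp

lemma retract_biprod {a b : Fin n} (hab : a ≤ b) {X Y : RepCat n}
    (h : Retract (intervalRep a b) (X ⊞ Y)) :
    Nonempty (Retract (intervalRep a b) X) ∨ Nonempty (Retract (intervalRep a b) Y) :=
  retract_or_retract_of_end (end_intervalRep hab) h

/-- The left summand of a direct sum is a retract of it. -/
def retractInl (X Y : RepCat n) : Retract X (X ⊞ Y) := ⟨biprod.inl, biprod.fst, by simp⟩

/-- The right summand of a direct sum is a retract of it. -/
def retractInr (X Y : RepCat n) : Retract Y (X ⊞ Y) := ⟨biprod.inr, biprod.snd, by simp⟩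

lemma finiteDimensional_of_retract {X Y : RepCat n} (h : Retract Y X) (i : (Fin n)ᵒᵖ)
    [FiniteDimensional F2 (X.obj i)] : FiniteDimensional F2 (Y.obj i) := by
  refine FiniteDimensional.of_injective (h.i.app i).hom
    (Function.LeftInverse.injective (g := (h.r.app i).hom) fun x => ?_)
  exact congrArg (fun f : Y ⟶ Y => (f.app i).hom x) h.retract

/-- Retracts are direct summands, with a complement that is again finite dimensional. -/
lemma exists_complement {X A : FinDimRep n} (h : Retract A.1 X.1) :
    ∃ Y : FinDimRep n, Nonempty (X.1 ≅ A.1 ⊞ Y.1) := by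
  let e : X.1 ≅ A.1 ⊞ cokernel h.i := biprod.uniqueUpToIso _ _
    (isBilimitBinaryBiconeOfIsSplitMonoOfCokernel (cokernelIsCokernel h.i))
  refine ⟨⟨cokernel h.i, fun i => ?_⟩, ⟨e⟩⟩
  have := X.2 i
  exact finiteDimensional_of_retract ((retractInr _ _).trans (Retract.ofIso e.symm)) i

/-! ### Interval retracts of nonzero representations -/

/-- The restriction map `X j → X i` of a contravariant representation, for `i ≤ j`. -/
def resMap (X : RepCat n) {i j : Fin n} (h : i ≤ j) : X.obj (op j) →ₗ[F2] X.obj (op i) :=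
  (X.map (homOfLE h).op).hom

lemma map_eq_resMap (X : RepCat n) {i j : (Fin n)ᵒᵖ} (f : i ⟶ j) (x : X.obj i) :
    (X.map f).hom x = resMap X (leOfHom f.unop) x := by
  rfl

lemma resMap_resMap (X : RepCat n) {i j k : Fin n} (h : i ≤ j) (h' : j ≤ k)
    (x : X.obj (op k)) : resMap X h (resMap X h' x) = resMap X (h.trans h') x := by
  have := congrArg (fun f => f.hom x) (X.map_comp (homOfLE h').op (homOfLE h).op)
  exact this.symm

lemma resMap_self (X : RepCat n) (i : Fin n) (x : X.obj (op i)) : resMap X (le_refl i) x = x :=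
  congrArg (fun f => f.hom x) (X.map_id (op i))

/-- An element of `X b` that restricts to zero below `a` defines a map from the interval
module. -/
def fromInterval (X : RepCat n) {a b : Fin n} (x : X.obj (op b))
    (hx : ∀ i (h : i ≤ b), i < a → resMap X h x = 0) : intervalRep a b ⟶ X where
  app i := ModuleCat.ofHom
    (if h : i.unop ≤ b then
      (LinearMap.toSpanSingleton F2 _ (resMap X h x)).comp (intervalFibre a b i.unop).subtype
    else 0)
  naturality := by
    intro i j f
    ext c
    have hji : j.unop ≤ i.unop := leOfHom f.unop
    change intervalFibre a b i.unop at c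
    change (dite _ _ _ : intervalFibre a b j.unop →ₗ[F2] X.obj j)
      (intervalMap a b i.unop j.unop c) = (X.map f).hom
      ((dite _ _ _ : intervalFibre a b i.unop →ₗ[F2] X.obj i) c)
    by_cases hc : a ≤ i.unop ∧ i.unop ≤ b
    · have hjb : j.unop ≤ b := hji.trans hc.2
      rw [dif_pos hjb, dif_pos hc.2, map_eq_resMap]
      change (intervalMap a b i.unop j.unop c).1 • resMap X hjb x =
        resMap X hji (c.1 • resMap X hc.2 x)
      rw [map_smul, resMap_resMap]
      by_cases hj : a ≤ j.unop
      · rw [intervalMap_of_mem ⟨hj, hjb⟩]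
      · rw [hx _ hjb (not_le.1 hj), smul_zero, smul_zero]
    · rw [intervalFibre_eq_zero hc c]
      simp only [map_zero]

/-- A linear functional on `X a` that vanishes on restrictions from above `b` defines a map to
the interval module. -/
def toInterval (X : RepCat n) {a b : Fin n} (φ : X.obj (op a) →ₗ[F2] F2)
    (hφ : ∀ i (h : a ≤ i), b < i → ∀ y, φ (resMap X h y) = 0) : X ⟶ intervalRep a b where
  app i := ModuleCat.ofHom
    (if h : a ≤ i.unop ∧ i.unop ≤ b then
      (φ.comp (resMap X h.1)).codRestrict (intervalFibre a b i.unop)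
        (fun _ => mem_intervalFibre_of_mem h _)
    else 0)
  naturality := by
    intro i j f
    ext y
    have hji : j.unop ≤ i.unop := leOfHom f.unop
    by_cases hj : a ≤ j.unop ∧ j.unop ≤ b
    · refine Subtype.ext ?_
      change ((dite _ _ _ : X.obj j →ₗ[F2] intervalFibre a b j.unop) ((X.map f).hom y)).1 =
        (intervalMap a b i.unop j.unop
          ((dite _ _ _ : X.obj i →ₗ[F2] intervalFibre a b i.unop) y)).1
      rw [intervalMap_of_mem hj, dif_pos hj]
      change φ (resMap X hj.1 ((X.map f).hom y)) = _
      rw [map_eq_resMap, resMap_resMap]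
      have hai : a ≤ i.unop := hj.1.trans hji
      by_cases hi : i.unop ≤ b
      · rw [dif_pos ⟨hai, hi⟩]
        rfl
      · rw [dif_neg (fun h => hi h.2), hφ _ _ (not_le.1 hi)]
        rfl
    · exact (intervalFibre_eq_zero hj _).trans (intervalFibre_eq_zero hj _).symm

/-- Every nonzero representation has an interval module as a retract: let `a` be the smallest
vertex with `X a ≠ 0` and `b` the largest one with `X b → X a` nonzero. -/
lemma exists_retract {X : RepCat n} (hX : ¬ IsZero X) :
    ∃ a b : Fin n, a ≤ b ∧ Nonempty (Retract (intervalRep a b) X) := by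
  classical
  obtain ⟨a, ha, hamin⟩ : ∃ a : Fin n, (∃ x : X.obj (op a), x ≠ 0) ∧
      ∀ i < a, ∀ x : X.obj (op i), x = 0 := by
    have hne : ∃ a : Fin n, ∃ x : X.obj (op a), x ≠ 0 := by
      by_contra! h
      refine hX ((Functor.isZero_iff _).2 fun i => ?_)
      have : Subsingleton (X.obj i) := ⟨fun x y => (h i.unop x).trans (h i.unop y).symm⟩
      exact ModuleCat.isZero_of_subsingleton _
    obtain ⟨a, ha, hmin⟩ := WellFounded.has_min (wellFounded_lt (α := Fin n))
      {a | ∃ x : X.obj (op a), x ≠ 0} hne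
    exact ⟨a, ha, fun i hi x => by_contra fun hx => hmin i ⟨x, hx⟩ hi⟩
  obtain ⟨b, ⟨hab, x, hx⟩, hbmax⟩ : ∃ b : Fin n,
      (∃ h : a ≤ b, ∃ x : X.obj (op b), resMap X h x ≠ 0) ∧
      ∀ i, b < i → ∀ (h : a ≤ i) (y : X.obj (op i)), resMap X h y = 0 := by
    obtain ⟨b, hb, hmax⟩ := WellFounded.has_min (wellFounded_gt (α := Fin n))
      {b | ∃ h : a ≤ b, ∃ x : X.obj (op b), resMap X h x ≠ 0} (by
        obtain ⟨x, hx⟩ := ha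
        exact ⟨a, le_rfl, x, by rwa [resMap_self]⟩)
    exact ⟨b, hb, fun i hi h y => by_contra fun hy => hmax i ⟨h, y, hy⟩ hi⟩
  obtain ⟨φ, hφ⟩ : ∃ φ : X.obj (op a) →ₗ[F2] F2, φ (resMap X hab x) = 1 :=
    Module.Projective.exists_dual_eq_one F2 hx
  refine ⟨a, b, hab, ⟨⟨fromInterval X x (fun i _ hi => hamin i hi _),
    toInterval X φ (fun i h hi y => by rw [hbmax i hi, map_zero]), ?_⟩⟩⟩
  ext i c
  by_cases hi : a ≤ i.unop ∧ i.unop ≤ b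
  · refine Subtype.ext ?_
    change ((dite _ _ _ : X.obj i →ₗ[F2] intervalFibre a b i.unop)
      ((dite _ _ _ : intervalFibre a b i.unop →ₗ[F2] X.obj i) c)).1 = c.1
    rw [dif_pos hi, dif_pos hi.2]
    change φ (resMap X hi.1 (c.1 • resMap X hi.2 x)) = c.1
    rw [map_smul, resMap_resMap, map_smul, hφ, smul_eq_mul, mul_one]
  · exact (intervalFibre_eq_zero hi _).trans (intervalFibre_eq_zero hi _).symm

/-- The sum of the dimensions of a representation at all vertices. -/
def totalDim (X : FinDimRep n) : ℕ := ∑ i : Fin n, Module.finrank F2 (X.1.obj (op i))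

lemma totalDim_lt {X A Y : FinDimRep n} (hA : ¬ IsZero A.1) (e : X.1 ≅ A.1 ⊞ Y.1) :
    totalDim Y < totalDim X := by
  have hfd := X.2
  have hfd' := Y.2
  let h : Retract Y.1 X.1 := (retractInr _ _).trans (Retract.ofIso e.symm)
  have hinj : ∀ i, Function.Injective (h.i.app i).hom := fun i =>
    Function.LeftInverse.injective (g := (h.r.app i).hom) fun x =>
      congrArg (fun f : Y.1 ⟶ Y.1 => (f.app i).hom x) h.retract
  refine lt_of_le_of_ne (Finset.sum_le_sum fun i _ =>
    LinearMap.finrank_le_finrank_of_injective (hinj (op i))) fun heq => hA ?_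
  have heq' := (Finset.sum_eq_sum_iff_of_le fun i _ =>
    LinearMap.finrank_le_finrank_of_injective (hinj (op i))).1 heq
  -- Equality of dimensions makes `Y ⟶ X` surjective at each vertex, but its composite with the
  -- split epimorphism `X ⟶ A` is zero.
  have hz : ∀ i, Function.Surjective (h.i.app i).hom := fun i =>
    (LinearMap.injective_iff_surjective_of_finrank_eq_finrank
      (heq' i.unop (Finset.mem_univ _))).1 (hinj i)
  let h' : Retract A.1 X.1 := (retractInl _ _).trans (Retract.ofIso e.symm)
  have hcomp : h.i ≫ h'.r = 0 := by
    change (biprod.inr ≫ e.inv) ≫ e.hom ≫ biprod.fst = 0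
    simp
  refine (Functor.isZero_iff _).2 fun i => ?_
  have : Subsingleton (A.1.obj i) := by
    refine subsingleton_of_forall_eq 0 fun y => ?_
    obtain ⟨z, hz⟩ := hz i ((h'.i.app i).hom y)
    have h1 : (h'.r.app i).hom ((h'.i.app i).hom y) = y :=
      congrArg (fun f : A.1 ⟶ A.1 => (f.app i).hom y) h'.retract
    rw [← h1, ← hz]
    exact congrArg (fun f : Y.1 ⟶ A.1 => (f.app i).hom z) hcomp
  exact ModuleCat.isZero_of_subsingleton _

/-! ### Classification of indecomposables and of additive classes -/

/-- The pairs `a ≤ b`, which index the interval modules. -/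
abbrev IntervalIndex (n : ℕ) := {p : Fin n × Fin n // p.1 ≤ p.2}

/-- The interval module attached to a pair `a ≤ b`. -/
def IntervalIndex.rep (p : IntervalIndex n) : FinDimRep n := intervalFD p.1.1 p.1.2

lemma card_intervalIndex (n : ℕ) : Nat.card (IntervalIndex n) = n * (n + 1) / 2 := by
  rw [← Nat.card_congr (Sym2.sortEquiv (α := Fin n)), Nat.card_eq_fintype_card, Sym2.card,
    Fintype.card_fin, Nat.choose_two_right, Nat.add_sub_cancel, mul_comm]

lemma indecomposable_interval (p : IntervalIndex n) : IndecomposableRep p.rep :=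
  ⟨not_isZero_intervalRep p.2, fun _ _ ⟨e⟩ => isZero_or_isZero_of_end (end_intervalRep p.2) e⟩

lemma exists_iso_interval {X : FinDimRep n} (hX : IndecomposableRep X) :
    ∃ p : IntervalIndex n, Nonempty (p.rep.1 ≅ X.1) := by
  obtain ⟨a, b, hab, ⟨h⟩⟩ := exists_retract hX.1
  obtain ⟨Y, ⟨e⟩⟩ := exists_complement (A := intervalFD a b) h
  refine ⟨⟨(a, b), hab⟩, ?_⟩
  rcases hX.2 _ _ ⟨e⟩ with h0 | h0
  · exact absurd h0 (not_isZero_intervalRep hab)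
  · exact ⟨(e ≪≫ (biprod.uniqueUpToIso _ _ (isBinaryBilimitOfTotal (BinaryBicone.mk
      (P := intervalFD a b |>.1) (Q := Y.1) (intervalFD a b).1 (𝟙 _) 0 (𝟙 _) 0
      (by simp) (by simp) (by simp) (h0.eq_of_src _ _)) (by simp))).symm).symm⟩

lemma index_eq_of_retract {p q : IntervalIndex n} (h : Retract p.rep.1 q.rep.1) : p = q := by
  obtain ⟨h1, h2⟩ := interval_eq_of_retract p.2 q.2 h
  exact Subtype.ext (Prod.ext h1 h2)

/-- Interval modules classify the indecomposable representations. -/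
lemma bijective_index_to_quotient :
    Function.Bijective (fun p : IntervalIndex n =>
      (Quotient.mk (isoSetoid n) ⟨p.rep, indecomposable_interval p⟩)) := by
  refine ⟨fun p q hpq => ?_, fun x => ?_⟩
  · obtain ⟨e⟩ := Quotient.exact hpq
    exact index_eq_of_retract (Retract.ofIso e)
  · induction x using Quotient.inductionOn with
    | h X =>
      obtain ⟨p, hp⟩ := exists_iso_interval X.2
      exact ⟨p, Quotient.sound hp⟩

/-- A class of representations that contains zero and is closed under direct sums and summands
contains a representation exactly when it contains all its interval retracts. -/
lemma mem_iff_forall_retract {S : Set (FinDimRep n)} (hzero : ContainsZero S) (hsum : SumClosed S) (hsummand : SummandClosed S) (X : FinDimRep n) :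
    X ∈ S ↔ ∀ p : IntervalIndex n, Nonempty (Retract p.rep.1 X.1) → p.rep ∈ S := by
  constructor
  · rintro hX p ⟨h⟩
    obtain ⟨Y, he⟩ := exists_complement h
    exact (hsummand _ _ _ hX he).1
  · induction hd : totalDim X using Nat.strong_induction_on generalizing X with
    | _ d ih =>
      intro hX
      by_cases h0 : IsZero X.1
      · exact hzero X h0
      obtain ⟨a, b, hab, ⟨h⟩⟩ := exists_retract h0
      let p : IntervalIndex n := ⟨(a, b), hab⟩
      obtain ⟨Y, ⟨e⟩⟩ := exists_complement (A := p.rep) h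
      refine hsum p.rep Y X (hX p ⟨h⟩) (ih _ (hd ▸ totalDim_lt (not_isZero_intervalRep hab) e)
        Y rfl ?_) ⟨e⟩
      rintro q ⟨hq⟩
      exact hX q ⟨hq.trans ((retractInr _ _).trans (Retract.ofIso e.symm))⟩

/-- Additive classes of representations correspond to sets of intervals. -/
def additiveClassEquiv (n : ℕ) : {S : Set (FinDimRep n) //
      IsoClosed S ∧ ContainsZero S ∧ SumClosed S ∧ SummandClosed S} ≃ Set (IntervalIndex n) where
  toFun S := {p | p.rep ∈ S.1}
  invFun T := ⟨{X | ∀ p : IntervalIndex n, Nonempty (Retract p.rep.1 X.1) → p ∈ T}, by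
    refine ⟨?_, ?_, ?_, ?_⟩
    · rintro X Y ⟨e⟩ hX p ⟨h⟩
      exact hX p ⟨h.trans (Retract.ofIso e.symm)⟩
    · rintro X hX p ⟨h⟩
      exact absurd (hX.of_mono h.i) (not_isZero_intervalRep p.2)
    · rintro X Y Z hX hY ⟨e⟩ p ⟨h⟩
      exact (retract_biprod p.2 (h.trans (Retract.ofIso e))).elim (hX p) (hY p)
    · rintro X Y Z hZ ⟨e⟩
      exact ⟨fun p ⟨h⟩ => hZ p ⟨h.trans ((retractInl _ _).trans (Retract.ofIso e.symm))⟩,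
        fun p ⟨h⟩ => hZ p ⟨h.trans ((retractInr _ _).trans (Retract.ofIso e.symm))⟩⟩⟩
  left_inv := by
    rintro ⟨S, _, h2, h3, h4⟩
    refine Subtype.ext (Set.ext fun X => ?_)
    exact (mem_iff_forall_retract h2 h3 h4 X).symm
  right_inv T := by
    refine Set.ext fun p => ⟨fun h => h p ⟨Retract.refl _⟩, ?_⟩
    rintro hp q ⟨h⟩
    rwa [index_eq_of_retract h]

theorem card_additive_subcategories_and_indecomposables (n : ℕ) (hn : 1 ≤ n) :
    Nat.card {S : Set (FinDimRep n) //
      IsoClosed S ∧ ContainsZero S ∧ SumClosed S ∧ SummandClosed S} =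
      2 ^ (n * (n + 1) / 2) ∧
    Nat.card (Quotient (isoSetoid n)) = n * (n + 1) / 2 := by
  classical
  constructor
  · rw [Nat.card_congr (additiveClassEquiv n), Nat.card_eq_fintype_card, Fintype.card_set,
      ← Nat.card_eq_fintype_card, card_intervalIndex]
  · rw [← Nat.card_congr (Equiv.ofBijective _ (bijective_index_to_quotient (n := n))),
      card_intervalIndex]
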